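/- Let k ∈ [0,1) and let S be a weakly regular AG-groupoid with a left identity e. Then every (∈,∈∨q_k)-fuzzy generalized bi-ideal of S is an (∈,∈∨q_k)-fuzzy bi-ideal of S. -/

import Mathlib

/-- An AG-groupoid: a magma satisfying the left invertive law `(ab)c = (cb)a`. -/
def LeftInvertive (S : Type*) [Mul S] : Prop := ∀ a b c : S, a * b * c = c * b * a

/-- A fuzzy subset: a function into `[0,1]`. -/
def IsFuzzy {S : Type*} (f : S → ℝ) : Prop := ∀ x, 0 ≤ f x ∧ f x ≤ 1

/-- A weakly regular AG-groupoid: each `a` satisfies `a = (ax)(ay)` for some `x, y`. -/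
def WeaklyRegular (S : Type*) [Mul S] : Prop := ∀ a : S, ∃ x y : S, a = a * x * (a * y)

/-- The product of fuzzy subsets: `(f ∘ g)(a)` is the supremum of `min(f b, g c)` over
factorizations `a = b * c` (the empty supremum in `ℝ` is `0`). -/
noncomputable def fuzzyProd {S : Type*} [Mul S] (f g : S → ℝ) (a : S) : ℝ :=
  sSup {v : ℝ | ∃ b c : S, a = b * c ∧ v = min (f b) (g c)}

/-- The constant fuzzy subset `1`. -/
def fuzzyOne (S : Type*) : S → ℝ := fun _ => 1

/-- An `(∈,∈∨q_k)`-fuzzy left ideal of an AG-groupoid. -/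
def FuzzyLeftIdealK {S : Type*} [Mul S] (k : ℝ) (f : S → ℝ) : Prop :=
  ∀ x y : S, min (f y) ((1 - k) / 2) ≤ f (x * y)

/-- An `(∈,∈∨q_k)`-fuzzy right ideal of an AG-groupoid. -/
def FuzzyRightIdealK {S : Type*} [Mul S] (k : ℝ) (f : S → ℝ) : Prop :=
  ∀ x y : S, min (f x) ((1 - k) / 2) ≤ f (x * y)

/-- An `(∈,∈∨q_k)`-fuzzy generalized bi-ideal of an AG-groupoid. -/
def FuzzyGenBiIdealK {S : Type*} [Mul S] (k : ℝ) (f : S → ℝ) : Prop :=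
  ∀ x y z : S, min (min (f x) (f z)) ((1 - k) / 2) ≤ f (x * y * z)

/-- An `(∈,∈∨q_k)`-fuzzy bi-ideal of an AG-groupoid. -/
def FuzzyBiIdealK {S : Type*} [Mul S] (k : ℝ) (f : S → ℝ) : Prop :=
  (∀ x y : S, min (min (f x) (f y)) ((1 - k) / 2) ≤ f (x * y)) ∧
  FuzzyGenBiIdealK k f

/-- An `(∈,∈∨q_k)`-fuzzy quasi-ideal of an AG-groupoid. -/
def FuzzyQuasiIdealK {S : Type*} [Mul S] (k : ℝ) (f : S → ℝ) : Prop :=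
  ∀ x : S,
    min (min (fuzzyProd f (fuzzyOne S) x) (fuzzyProd (fuzzyOne S) f x)) ((1 - k) / 2) ≤ f x

/-- `f_k`. -/
noncomputable def subK {S : Type*} (k : ℝ) (f : S → ℝ) : S → ℝ := fun a => min (f a) ((1 - k) / 2)

/-- `f ∧_k g`. -/
noncomputable def andK {S : Type*} (k : ℝ) (f g : S → ℝ) : S → ℝ :=
  fun a => min (min (f a) (g a)) ((1 - k) / 2)

/-- `f ∘_k g`. -/
noncomputable def prodK {S : Type*} [Mul S] (k : ℝ) (f g : S → ℝ) : S → ℝ :=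
  fun a => min (fuzzyProd f g a) ((1 - k) / 2)

/-- A regular AG-groupoid: each `a` satisfies `a = (ax)a` for some `x`. -/
def RegularAG (S : Type*) [Mul S] : Prop := ∀ a : S, ∃ x : S, a = a * x * a

/-- An intra-regular AG-groupoid: each `a` satisfies `a = (x(aa))y` for some `x, y`. -/
def IntraRegularAG (S : Type*) [Mul S] : Prop :=
  ∀ a : S, ∃ x y : S, a = x * (a * a) * y

namespace LeftInvertive

variable {S : Type*} [Mul S]

protected theorem mul_mul_mul_comm (hS : LeftInvertive S) (a b c d : S) :
    a * b * (c * d) = a * c * (b * d) :=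
  calc
    a * b * (c * d) = c * d * b * a := hS a b (c * d)
    _ = b * d * c * a := by rw [hS c d b]
    _ = a * c * (b * d) := hS (b * d) c a

protected theorem mul_left_comm (hS : LeftInvertive S) {e : S} (he : ∀ x : S, e * x = x)
    (a b c : S) : a * (b * c) = b * (a * c) :=
  calc
    a * (b * c) = e * a * (b * c) := by rw [he]
    _ = e * b * (a * c) := hS.mul_mul_mul_comm e a b c
    _ = b * (a * c) := by rw [he]

end LeftInvertive

theorem WeaklyRegular.exists_eq_self_mul {S : Type*} [Mul S] (hwr : WeaklyRegular S)
    (hS : LeftInvertive S) {e : S} (he : ∀ x : S, e * x = x) (a : S) : ∃ u : S, a = a * u := by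
  obtain ⟨x, y, hxy⟩ := hwr a
  exact ⟨a * x * y, hxy.trans (hS.mul_left_comm he (a * x) a y)⟩

theorem genBiIdealK_is_biIdealK_general {S : Type*} [Mul S] (hmul : ∀ a : S, ∃ u : S, a = a * u)
    {k : ℝ} {f : S → ℝ} (hf : FuzzyGenBiIdealK k f) : FuzzyBiIdealK k f := by
  refine ⟨fun a b => ?_, hf⟩
  obtain ⟨u, hu⟩ := hmul a
  calc
    min (min (f a) (f b)) ((1 - k) / 2) ≤ f (a * u * b) := hf a u b
    _ = f (a * b) := by rw [← hu]

/-- in a weakly regular AG-groupoid with left identity, every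
`(∈,∈∨q_k)`-fuzzy generalized bi-ideal is an `(∈,∈∨q_k)`-fuzzy bi-ideal. -/
theorem genBiIdealK_is_biIdealK {S : Type*} [Mul S] (hS : LeftInvertive S)
    (k : ℝ) (hk0 : 0 ≤ k) (hk1 : k < 1)
    (e : S) (he : ∀ x : S, e * x = x) (hwr : WeaklyRegular S) :
    ∀ f : S → ℝ, IsFuzzy f → FuzzyGenBiIdealK k f → FuzzyBiIdealK k f := by
  intro f _ hf
  exact genBiIdealK_is_biIdealK_general (hwr.exists_eq_self_mul hS he) hf
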